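/- (Proposition 3.) Let f : 𝒜 × ℬ → {0,1} be a target function and let M be a finite message set. Suppose that every classical strategy has worst-case success probability at most 1/2: for all probability distributions S(·|a) on M (a ∈ 𝒜) and R(·|A,b) on {0,1} (A ∈ M, b ∈ ℬ) there exist a ∈ 𝒜, b ∈ ℬ with Σ_{A∈M} R(f(a,b)|A,b) S(A|a) ≤ 1/2. Then every detection-loophole strategy also has worst-case success probability at most 1/2: for every probability distribution p on a finite strategy set I, distributions P(·|a) on M, distributions P_i(·|A,b) on {0,1}, and efficiencies η_i(A,b) ∈ [0,1] with D(a,b) := Σ_{i,A} p_i η_i(A,b) P(A|a) > 0 for all a, b, there exist a ∈ 𝒜, b ∈ ℬ with P_DL(f(a,b)|a,b) := (Σ_{i,A} p_i η_i(A,b) P_i(f(a,b)|A,b) P(A|a)) / D(a,b) ≤ 1/2. -/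

import Mathlib

/-- Proposition 3: if every classical strategy for computing
`f : 𝒜 → ℬ → Fin 2` with message set `M` has worst-case success probability at
most `1/2`, then so does every detection-loophole strategy: for any
distribution `p` on Bob's strategies `I`, encodings `P(·|a)`, decodings
`Pᵢ(·|A,b)` and efficiencies `ηᵢ(A,b) ∈ [0,1]` with positive click probability
`D(a,b)`, there are inputs `a, b` with `P_DL(f(a,b)|a,b) ≤ 1/2`. -/
theorem prop3
    {𝒜 ℬ M I : Type*}
    [Fintype 𝒜] [Fintype ℬ] [Fintype M] [Fintype I]
    [Nonempty 𝒜] [Nonempty ℬ] [Nonempty M] [Nonempty I]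
    (f : 𝒜 → ℬ → Fin 2)
    -- every classical strategy has worst-case success probability ≤ 1/2
    (hclassical : ∀ (S : 𝒜 → M → ℝ) (R : M → ℬ → Fin 2 → ℝ),
      (∀ a A, 0 ≤ S a A) → (∀ a, ∑ A, S a A = 1) →
      (∀ A b B, 0 ≤ R A b B) → (∀ A b, ∑ B, R A b B = 1) →
      ∃ (a : 𝒜) (b : ℬ), ∑ A, R A b (f a b) * S a A ≤ 1 / 2)
    -- an arbitrary detection-loophole strategy
    (p : I → ℝ) (hp : ∀ i, 0 ≤ p i) (hp1 : ∑ i, p i = 1)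
    (P : 𝒜 → M → ℝ) (hP : ∀ a A, 0 ≤ P a A) (hP1 : ∀ a, ∑ A, P a A = 1)
    (Pi : I → M → ℬ → Fin 2 → ℝ)
    (hPi : ∀ i A b B, 0 ≤ Pi i A b B) (hPi1 : ∀ i A b, ∑ B, Pi i A b B = 1)
    (η : I → M → ℬ → ℝ) (hη : ∀ i A b, 0 ≤ η i A b ∧ η i A b ≤ 1)
    (hD : ∀ a b, 0 < ∑ i, ∑ A, p i * η i A b * P a A) :
    ∃ (a : 𝒜) (b : ℬ),
      (∑ i, ∑ A, p i * η i A b * Pi i A b (f a b) * P a A) /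
        (∑ i, ∑ A, p i * η i A b * P a A) ≤ 1 / 2 := by
  obtain ⟨a, b, h⟩ := hclassical P
    (fun A b B => ∑ i, p i * (η i A b * Pi i A b B + (1 - η i A b) / 2)) hP hP1
    (fun A b B => Finset.sum_nonneg fun i _ => mul_nonneg (hp i)
      (add_nonneg (mul_nonneg (hη i A b).1 (hPi i A b B))
        (div_nonneg (sub_nonneg.2 (hη i A b).2) (by norm_num))))
    (fun A b => by
      rw [Finset.sum_comm]
      refine Eq.trans ?_ hp1
      refine Finset.sum_congr rfl fun i _ => ?_
      have h1 := hPi1 i A b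
      rw [Fin.sum_univ_two] at h1 ⊢
      linear_combination p i * η i A b * h1)
  refine ⟨a, b, ?_⟩
  rw [div_le_iff₀ (hD a b)]
  have hone : ∑ i, ∑ A, p i * P a A = 1 := by
    simp_rw [← Finset.mul_sum, hP1, mul_one, hp1]
  have key : ∑ A, (∑ i, p i * (η i A b * Pi i A b (f a b) + (1 - η i A b) / 2)) * P a A
      = (∑ i, ∑ A, p i * η i A b * Pi i A b (f a b) * P a A)
        + (1 / 2) * (∑ i, ∑ A, p i * P a A)
        - (1 / 2) * (∑ i, ∑ A, p i * η i A b * P a A) := by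
    simp_rw [Finset.sum_mul]
    rw [Finset.sum_comm]
    simp_rw [Finset.mul_sum, ← Finset.sum_add_distrib, ← Finset.sum_sub_distrib]
    refine Finset.sum_congr rfl fun i _ => Finset.sum_congr rfl fun A _ => ?_
    ring
  have h' := key.symm.trans_le h
  rw [hone] at h'
  linarith
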